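/- arXiv:0903.3835 — 2 statements merged into one kernel-verified Lean document; each statement's English description precedes it below -/
import Mathlib

section
/- Let R be a commutative Noetherian ring, G a linearly ordered abelian group, and v : R → G ∪ {+∞} a valuation with v(g) ≥ 0 for every g ∈ R, and let S = { v(g) : g ∈ R, v(g) ≠ +∞ } be its semigroup of values. Then every element a ∈ S has only finitely many representations a = a₁ + a₂ as a sum of two elements a₁, a₂ ∈ S. -/
/-!
As `v` is nonnegative, the elements whose value is at least a given value form an ideal, and a
larger value gives a strictly smaller ideal. The ascending chain condition therefore makes the set
of values well-ordered. Infinitely many representations `a = a₁ + a₂` would contain a sequence along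
which `a₁` strictly increases, and then `a₂` would strictly decrease forever.
-/

section Superlevel

variable {R M Γ : Type*} [Semiring R] [AddCommMonoid M] [Module R M] [LinearOrder Γ]

/-- The submodule of elements whose value is at least that of `y`; for a ring, this is the value
ideal `{x | a ≤ v x}` of valuation theory at `a = v y`. The threshold is taken in the range of `v`
because `0` need not lie above an arbitrary `a : Γ`, whereas `v y ≤ v (0 • y) = v 0`. -/
def superlevelSubmodule (v : M → Γ) (hadd : ∀ x y, min (v x) (v y) ≤ v (x + y))
    (hsmul : ∀ (r : R) (x : M), v x ≤ v (r • x)) (y : M) : Submodule R M where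
  carrier := {x | v y ≤ v x}
  zero_mem' := (hsmul 0 y).trans_eq (congrArg v (zero_smul R y))
  add_mem' hx hx' := (le_min hx hx').trans (hadd _ _)
  smul_mem' r x hx := le_trans hx (hsmul r x)

theorem superlevelSubmodule_lt_superlevelSubmodule {v : M → Γ}
    (hadd : ∀ x y, min (v x) (v y) ≤ v (x + y))
    (hsmul : ∀ (r : R) (x : M), v x ≤ v (r • x)) {x y : M} (hxy : v x < v y) :
    superlevelSubmodule v hadd hsmul y < superlevelSubmodule v hadd hsmul x :=
  SetLike.lt_iff_le_and_exists.2
    ⟨fun _ hz ↦ hxy.le.trans hz, x, le_refl (v x), hxy.not_ge⟩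

theorem isWF_range_of_isNoetherian [IsNoetherian R M] {v : M → Γ}
    (hadd : ∀ x y, min (v x) (v y) ≤ v (x + y))
    (hsmul : ∀ (r : R) (x : M), v x ≤ v (r • x)) : (Set.range v).IsWF :=
  Set.wellFoundedOn_range.2 <|
    (InvImage.wf (superlevelSubmodule v hadd hsmul) wellFounded_gt).mono fun _ _ ↦
      superlevelSubmodule_lt_superlevelSubmodule hadd hsmul

end Superlevel

theorem isWF_preimage_of_strictMono {α β : Type*} [Preorder α] [Preorder β] {f : α → β}
    (hf : StrictMono f) {s : Set β} (hs : s.IsWF) : (f ⁻¹' s).IsWF :=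
  (hs.mapsTo f (Set.mapsTo_preimage f s)).mono' fun _ _ _ _ hab ↦ hf hab

theorem poincare_stmt1_general {R M G : Type*} [Semiring R] [AddCommMonoid M] [Module R M]
    [IsNoetherian R M] [AddCommMonoid G] [LinearOrder G] [IsOrderedCancelAddMonoid G]
    (v : M → WithTop G) (hadd : ∀ x y, min (v x) (v y) ≤ v (x + y))
    (hsmul : ∀ (r : R) (x : M), v x ≤ v (r • x)) (a : G) :
    {p : G × G | p.1 ∈ WithTop.some ⁻¹' Set.range v ∧ p.2 ∈ WithTop.some ⁻¹' Set.range v ∧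
      p.1 + p.2 = a}.Finite := by
  have hwf : (WithTop.some ⁻¹' Set.range v).IsWF :=
    isWF_preimage_of_strictMono WithTop.coe_strictMono (isWF_range_of_isNoetherian hadd hsmul)
  exact Set.AddAntidiagonal.finite_of_isPWO hwf.isPWO hwf.isPWO a

/-- Let `R` be a commutative Noetherian ring, `G` a linearly ordered abelian
group, and `v : R → G ∪ {+∞}` a valuation with `v g ≥ 0` for every `g ∈ R`, and let
`S = {v g : g ∈ R, v g ≠ +∞}` be its semigroup of values.  Then every element `a ∈ S` has
only finitely many representations `a = a₁ + a₂` as a sum of two elements `a₁, a₂ ∈ S`. -/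
theorem poincare_stmt1 {R : Type*} [CommRing R] [IsNoetherianRing R]
    {G : Type*} [AddCommGroup G] [LinearOrder G] [IsOrderedAddMonoid G]
    (v : R → WithTop G)
    (hmul : ∀ g₁ g₂ : R, v (g₁ * g₂) = v g₁ + v g₂)
    (hadd : ∀ g₁ g₂ : R, min (v g₁) (v g₂) ≤ v (g₁ + g₂))
    (hone : v 1 = 0)
    (hzero : v 0 = ⊤)
    (hnonneg : ∀ g : R, 0 ≤ v g)
    (S : Set G)
    (hS : S = {a : G | ∃ g : R, v g = (a : WithTop G)}) :
    ∀ a ∈ S, {p : G × G | p.1 ∈ S ∧ p.2 ∈ S ∧ p.1 + p.2 = a}.Finite := by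
  subst hS
  have hsmul (r x : R) : v x ≤ v (r • x) := by
    rw [smul_eq_mul, hmul]
    exact le_add_of_nonneg_left (hnonneg r)
  exact fun a _ ↦ poincare_stmt1_general v hadd hsmul a
end

section
/- Let f ∈ ℂ[[x,y]] be an irreducible formal power series with zero constant term. Then there exist φ₁, φ₂ ∈ ℂ[[τ]] with zero constant term, not both zero, such that f(φ₁(τ), φ₂(τ)) = 0 and, moreover, the kernel of the substitution homomorphism ℂ[[x,y]] → ℂ[[τ]], g ↦ g(φ₁,φ₂), is exactly the principal ideal (f) generated by f. (Existence of a parametrization/uniformization of the irreducible curve germ {f = 0}.) -/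
/-- The substitution `g(x,y) ↦ g(φ₁(τ), φ₂(τ))` of two one-variable power series with zero
constant term into a two-variable power series. -/
noncomputable def substPS (φ₁ φ₂ : PowerSeries ℂ) (g : MvPowerSeries (Fin 2) ℂ) :
    PowerSeries ℂ :=
  PowerSeries.mk fun d =>
    ∑ p ∈ Finset.range (d + 1) ×ˢ Finset.range (d + 1),
      MvPowerSeries.coeff (Finsupp.single 0 p.1 + Finsupp.single 1 p.2) g *
        PowerSeries.coeff d (φ₁ ^ p.1 * φ₂ ^ p.2)

/- Let `K` be the coefficient field. If `f` is not divisible by the variable `t`, Weierstrass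
preparation turns it into a distinguished polynomial in the other variable over `K⟦t⟧`. A monic
polynomial over `K⟦t⟧` has a root `ψ(t ^ (1 / N))`, by induction on the degree: make the subleading
coefficient vanish by a translation and rescale along the last side of the Newton polygon. Then some
lower coefficient is nonzero modulo `t`, whereas an irreducible polynomial with vanishing subleading
coefficient would be distinguished; so the rescaled polynomial factors.

The curve is then parametrized by `t = τ ^ N`, with `ψ(τ)` for the other variable. Modulo a
Weierstrass polynomial of `f`, a series killed by this substitution is a polynomial, hence divisible
by the minimal polynomial of `ψ`, which is associated to `f`. Finally, an irreducible `f` cannot be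
divisible by both variables, as these are not associated. -/

open scoped Polynomial PowerSeries
open IsLocalRing

section Polynomial

open Polynomial

theorem nextCoeff_taylor {R : Type*} [Semiring R] (r : R) (P : R[X]) :
    (taylor r P).nextCoeff = P.nextCoeff + P.natDegree * P.leadingCoeff * r := by
  rcases eq_or_ne P.natDegree 0 with h0 | h0
  · simp [nextCoeff, h0]
  · have hsucc : P.natDegree - 1 + 1 = P.natDegree := Nat.succ_pred_eq_of_ne_zero h0
    have hderiv : (hasseDeriv (P.natDegree - 1) P).natDegree < 2 :=
      (natDegree_hasseDeriv_le P _).trans_lt (by omega)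
    have hchoose : P.natDegree.choose (P.natDegree - 1) = P.natDegree := by
      rw [Nat.choose_symm (Nat.one_le_iff_ne_zero.mpr h0), Nat.choose_one_right]
    rw [nextCoeff_of_natDegree_pos (by rw [natDegree_taylor]; omega), natDegree_taylor,
      taylor_coeff, eval_eq_sum_range' hderiv, Finset.sum_range_succ, Finset.sum_range_one,
      hasseDeriv_coeff, hasseDeriv_coeff, add_comm 1, hsucc, hchoose, zero_add, Nat.choose_self,
      nextCoeff_of_natDegree_pos (by omega), leadingCoeff]
    simp

theorem monic_taylor {R : Type*} [Semiring R] {P : R[X]} (hP : P.Monic) (r : R) :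
    (taylor r P).Monic := by
  rw [Monic, leadingCoeff_taylor, hP.leadingCoeff]

theorem exists_scaleRoots_eq {R : Type*} [CommSemiring R] {P : R[X]} {s : R}
    (h : ∀ i, s ^ (P.natDegree - i) ∣ P.coeff i) : ∃ Q : R[X], Q.scaleRoots s = P := by
  rcases eq_or_ne P 0 with rfl | hP
  · exact ⟨0, zero_scaleRoots s⟩
  choose b hb using h
  have hb_of_le {i : ℕ} (hi : P.natDegree ≤ i) : b i = P.coeff i := by
    rw [hb, Nat.sub_eq_zero_of_le hi, pow_zero, one_mul]
  have hb_zero {i : ℕ} (hi : P.natDegree < i) : b i = 0 := by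
    rw [hb_of_le hi.le, coeff_eq_zero_of_natDegree_lt hi]
  let Q : R[X] := ∑ i ∈ Finset.range (P.natDegree + 1), monomial i (b i)
  have hcoeff (i : ℕ) : Q.coeff i = b i := by
    simpa [Q, coeff_monomial, Nat.lt_succ_iff] using fun hi ↦ (hb_zero hi).symm
  have hdeg : Q.natDegree = P.natDegree := by
    refine natDegree_eq_of_le_of_coeff_ne_zero
      (natDegree_le_iff_coeff_eq_zero.mpr fun i hi ↦ by rw [hcoeff, hb_zero hi]) ?_
    rwa [hcoeff, hb_of_le le_rfl, coeff_natDegree, leadingCoeff_ne_zero]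
  refine ⟨Q, ?_⟩
  ext i
  rw [coeff_scaleRoots, hcoeff, hdeg, hb i, mul_comm]

theorem nextCoeff_scaleRoots {R : Type*} [CommSemiring R] (P : R[X]) (s : R) :
    (P.scaleRoots s).nextCoeff = P.nextCoeff * s := by
  rcases eq_or_ne P.natDegree 0 with h0 | h0
  · simp [nextCoeff, h0]
  · simp [nextCoeff, h0, Nat.sub_sub_self (Nat.one_le_iff_ne_zero.mpr h0)]

theorem mem_of_isDistinguishedAt_of_eval₂_eq_zero {A B : Type*} [CommRing A] [CommRing B]
    {I : Ideal A} {J : Ideal B} [J.IsPrime] {f : A →+* B} (hIJ : I ≤ J.comap f) {W : A[X]}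
    (hW : W.IsDistinguishedAt I) {b : B} (hb : W.eval₂ f b = 0) : b ∈ J := by
  rcases subsingleton_or_nontrivial B with _ | _
  · exact Subsingleton.elim 0 b ▸ J.zero_mem
  have hroot : (W.map f).IsRoot b := by rwa [IsRoot, eval_map]
  have hpow := (hW.toIsWeaklyEisensteinAt.map f).pow_natDegree_le_of_root_of_monic_mem hroot
    (hW.monic.map f) _ le_rfl
  exact ‹J.IsPrime›.mem_of_pow_mem _ (Ideal.map_le_iff_le_comap.mpr hIJ hpow)

end Polynomial

section CompleteLocalRing

variable {A : Type*} [CommRing A]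

theorem dvd_of_isDistinguishedAt_of_coe_dvd_coe {I : Ideal A} [IsAdicComplete I A] {W P : A[X]}
    (hW : W.IsDistinguishedAt I) (h : (W : A⟦X⟧) ∣ P) : W ∣ P := by
  rw [← Ideal.mem_span_singleton, ← Ideal.Quotient.eq_zero_iff_mem] at h ⊢
  exact hW.algEquivQuotient.injective (by simpa using h)

theorem map_polynomial_coe_eq_eval₂ {B : Type*} [CommRing B] (S : A⟦X⟧ →+* B) (P : A[X]) :
    S P = P.eval₂ (S.comp PowerSeries.C) (S PowerSeries.X) := by
  suffices S.comp Polynomial.coeToPowerSeries.ringHom =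
      Polynomial.eval₂RingHom (S.comp PowerSeries.C) (S PowerSeries.X) from
    RingHom.congr_fun this P
  exact Polynomial.ringHom_ext (by simp) (by simp)

theorem exists_map_coe_eq_zero_iff_dvd [IsDomain A] [IsIntegrallyClosed A] {B : Type*}
    [CommRing B] [IsDomain B] {S : A⟦X⟧ →+* B}
    (hS : Function.Injective (S.comp PowerSeries.C)) {W : A[X]} (hW : W.Monic) (hSW : S W = 0) :
    ∃ M : A[X], ∀ p : A[X], S p = 0 ↔ M ∣ p := by
  let := (S.comp PowerSeries.C).toAlgebra
  have := Module.isTorsionFree_iff_algebraMap_injective.mpr hS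
  have hcoe (p : A[X]) : S p = Polynomial.aeval (S PowerSeries.X) p :=
    map_polynomial_coe_eq_eval₂ S p
  have hint : IsIntegral A (S PowerSeries.X) := ⟨W, hW, (hcoe W).symm.trans hSW⟩
  refine ⟨minpoly A (S PowerSeries.X), fun p ↦ ?_⟩
  rw [hcoe, minpoly.isIntegrallyClosed_dvd_iff hint]

variable [IsLocalRing A] [IsAdicComplete (maximalIdeal A) A]

theorem exists_isDistinguishedAt_associated {F : A⟦X⟧} (hF : ¬IsUnit F)
    (hres : F.map (residue A) ≠ 0) : ∃ W : A[X],
      W.IsDistinguishedAt (maximalIdeal A) ∧ W.natDegree ≠ 0 ∧ Associated F W := by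
  obtain ⟨W, u, hW⟩ := PowerSeries.exists_isWeierstrassFactorization hres
  have hFW : Associated F W := hW.eq_mul ▸ associated_mul_unit_left _ _ hW.isUnit
  refine ⟨W, hW.isDistinguishedAt, fun h0 ↦ hF ?_, hFW⟩
  rw [hFW.isUnit_iff, hW.isDistinguishedAt.monic.natDegree_eq_zero.mp h0, Polynomial.coe_one]
  exact isUnit_one

theorem isDistinguishedAt_of_irreducible_of_coeff_zero_mem {P : A[X]} (hP : P.Monic)
    (hirr : Irreducible P) (h0 : P.coeff 0 ∈ maximalIdeal A) :
    P.IsDistinguishedAt (maximalIdeal A) := by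
  have hunit : ¬IsUnit (P : A⟦X⟧) := by
    rwa [PowerSeries.isUnit_iff_constantCoeff, Polynomial.constantCoeff_coe, ← mem_nonunits_iff]
  have hres : (P : A⟦X⟧).map (residue A) ≠ 0 := by
    rw [← Polynomial.polynomial_map_coe, ne_eq, Polynomial.coe_eq_zero_iff]
    exact (hP.map _).ne_zero
  obtain ⟨W, hW, hW0, hPW⟩ := exists_isDistinguishedAt_associated hunit hres
  have hWunit : ¬IsUnit W := fun h ↦ hW0 (by rw [hW.monic.eq_one_of_isUnit h]; simp)
  have hassoc : Associated P W :=
    (hirr.dvd_iff.mp (dvd_of_isDistinguishedAt_of_coe_dvd_coe hW hPW.symm.dvd)).resolve_left hWunit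
  rwa [Polynomial.eq_of_monic_of_associated hP hW.monic hassoc]

/- In the translate of `P` to a root of its reduction every lower coefficient lies in the maximal
ideal, in particular the subleading one, so in characteristic zero that root is `0`. -/
theorem isDistinguishedAt_of_irreducible_of_nextCoeff_mem [IsAlgClosed (ResidueField A)]
    [CharZero (ResidueField A)] {P : A[X]} (hP : P.Monic) (hirr : Irreducible P)
    (hnext : P.nextCoeff ∈ maximalIdeal A) : P.IsDistinguishedAt (maximalIdeal A) := by
  have hn : 0 < P.natDegree := hP.natDegree_pos_of_not_isUnit hirr.not_isUnit
  obtain ⟨c, hc⟩ := IsAlgClosed.exists_root (P.map (residue A))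
    (by rw [hP.degree_map]; exact (Polynomial.natDegree_pos_iff_degree_pos.mp hn).ne')
  obtain ⟨a, rfl⟩ := residue_surjective c
  have hT : (Polynomial.taylor a P).IsDistinguishedAt (maximalIdeal A) := by
    refine isDistinguishedAt_of_irreducible_of_coeff_zero_mem (monic_taylor hP a)
      ((MulEquiv.irreducible_iff (Polynomial.taylorEquiv a)).mpr hirr) ?_
    rwa [Polynomial.taylor_coeff_zero, ← residue_eq_zero_iff, ← Polynomial.eval_map_apply]
  have ha : residue A a = 0 := by
    have hTnext : (Polynomial.taylor a P).nextCoeff ∈ maximalIdeal A := by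
      rw [Polynomial.nextCoeff_of_natDegree_pos (by rwa [Polynomial.natDegree_taylor])]
      exact hT.mem (by rw [Polynomial.natDegree_taylor]; omega)
    rw [nextCoeff_taylor, hP.leadingCoeff, mul_one, Ideal.add_mem_iff_right _ hnext,
      ← residue_eq_zero_iff, map_mul, map_natCast] at hTnext
    exact (mul_eq_zero.mp hTnext).resolve_left (Nat.cast_ne_zero.mpr hn.ne')
  refine ⟨⟨fun {i} hi ↦ ?_⟩, hP⟩
  have hTi := hT.mem (by rwa [Polynomial.natDegree_taylor] : i < _)
  rwa [← residue_eq_zero_iff, ← Polynomial.coeff_map, Polynomial.map_taylor, ha,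
    Polynomial.taylor_zero, Polynomial.coeff_map, residue_eq_zero_iff] at hTi

/- Dividing by the Weierstrass polynomial of `F` reduces membership in the kernel to polynomials,
where the minimal polynomial of `S X` decides it; that polynomial divides `F`. -/
theorem ker_eq_span_of_irreducible [IsDomain A] [IsIntegrallyClosed A] {B : Type*} [CommRing B]
    [IsDomain B] {F : A⟦X⟧} (hF : Irreducible F) (hres : F.map (residue A) ≠ 0)
    {S : A⟦X⟧ →+* B} (hS : Function.Injective (S.comp PowerSeries.C)) (hSF : S F = 0) :
    RingHom.ker S = Ideal.span {F} := by
  obtain ⟨W, hW, -, hFW⟩ := exists_isDistinguishedAt_associated hF.not_isUnit hres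
  have hSW : S W = 0 := zero_dvd_iff.mp (hSF ▸ map_dvd S hFW.dvd)
  obtain ⟨M, hM⟩ := exists_map_coe_eq_zero_iff_dvd hS hW.monic hSW
  have dvd_coe {p : A[X]} (hp : S p = 0) : (M : A⟦X⟧) ∣ p :=
    map_dvd Polynomial.coeToPowerSeries.ringHom ((hM p).mp hp)
  have hSM : S M = 0 := (hM M).mpr dvd_rfl
  have hFM : Associated F M :=
    (hF.dvd_iff.mp ((dvd_coe hSW).trans hFW.symm.dvd)).resolve_left
      fun h ↦ not_isUnit_zero (hSM ▸ h.map S)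
  refine le_antisymm (fun g hg ↦ ?_) (by simpa [Ideal.span_le] using hSF)
  have hdiv := (hW.isWeierstrassDivisorAt'.isWeierstrassDivisionAt_div_mod g).eq_mul_add
  rw [RingHom.mem_ker, hdiv, map_add, map_mul, hSW, zero_mul, zero_add] at hg
  rw [Ideal.mem_span_singleton, hFM.dvd_iff_dvd_left, hdiv]
  exact dvd_add ((dvd_coe hSW).mul_right _) (dvd_coe hg)

end CompleteLocalRing

theorem exists_minimal_slope {n : ℕ} {w : ℕ → ℕ∞} (h : ∃ i < n, w i ≠ ⊤) :
    ∃ k < n, w k ≠ ⊤ ∧ ∀ i < n, w k * (n - i : ℕ) ≤ w i * (n - k : ℕ) := by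
  let slope (i : ℕ) : ℚ := ((w i).toNat : ℚ) / ((n - i : ℕ) : ℚ)
  obtain ⟨k, hk, hmin⟩ := {i ∈ Finset.range n | w i ≠ ⊤}.exists_min_image slope
    (by simpa [Finset.filter_nonempty_iff] using h)
  simp only [Finset.mem_filter, Finset.mem_range] at hk hmin
  refine ⟨k, hk.1, hk.2, fun i hi ↦ ?_⟩
  rcases eq_or_ne (w i) ⊤ with htop | htop
  · rw [htop, ENat.top_mul (by exact_mod_cast (Nat.sub_pos_of_lt hk.1).ne')]
    exact le_top
  have hle := hmin i ⟨hi, htop⟩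
  rw [div_le_div_iff₀ (by simpa using hk.1) (by simpa using hi)] at hle
  rw [← ENat.natCast_toNat hk.2, ← ENat.natCast_toNat htop]
  exact_mod_cast hle

section PowerSeries

variable {K : Type*} [Field K]

open PowerSeries

theorem X_pow_dvd_iff_le_order {R : Type*} [Semiring R] {m : ℕ} {a : R⟦X⟧} :
    X ^ m ∣ a ↔ (m : ℕ∞) ≤ a.order := by
  rw [X_pow_dvd_iff]
  exact ⟨nat_le_order a m, fun h i hi ↦ coeff_of_lt_order i ((Nat.cast_lt.mpr hi).trans_le h)⟩

theorem expand_injective {R : Type*} [CommRing R] (N : ℕ) (hN : N ≠ 0) :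
    Function.Injective (expand (R := R) N hN) := fun a b hab ↦ by
  ext n
  rw [← coeff_expand_mul N hN a, hab, coeff_expand_mul]

theorem mem_maximalIdeal_powerSeries_iff {a : K⟦X⟧} :
    a ∈ maximalIdeal K⟦X⟧ ↔ constantCoeff a = 0 := by
  rw [← ker_coeff_eq_max_ideal, RingHom.mem_ker]

instance isAdicComplete_maximalIdeal_powerSeries :
    IsAdicComplete (maximalIdeal K⟦X⟧) K⟦X⟧ := by
  rw [maximalIdeal_eq_span_X]
  infer_instance

instance isAlgClosed_residueField_powerSeries [IsAlgClosed K] :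
    IsAlgClosed (ResidueField K⟦X⟧) :=
  IsAlgClosed.of_ringEquiv K _ residueFieldOfPowerSeries.symm

instance charZero_residueField_powerSeries [CharZero K] : CharZero (ResidueField K⟦X⟧) :=
  charZero_of_injective_ringHom (f := residueFieldOfPowerSeries.symm.toRingHom)
    (residueFieldOfPowerSeries (k := K)).symm.injective

/- `p / q` is the slope of the side of the Newton polygon of `P` through `(P.natDegree, 0)`. -/
theorem exists_scaleRoots_eq_map_expand {P : K⟦X⟧[X]} (hne : ∃ i < P.natDegree, P.coeff i ≠ 0) :
    ∃ (q : ℕ) (hq : q ≠ 0) (p : ℕ) (Q : K⟦X⟧[X]),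
      Q.scaleRoots (X ^ p) = P.map (expand (R := K) q hq : K⟦X⟧ →+* K⟦X⟧) ∧
        ¬Q.IsDistinguishedAt (maximalIdeal K⟦X⟧) := by
  obtain ⟨k, hk, hk0, hmin⟩ := exists_minimal_slope (w := fun i ↦ (P.coeff i).order)
    (by simpa only [ne_eq, order_eq_top] using hne)
  have hq : P.natDegree - k ≠ 0 := by omega
  obtain ⟨p, hp⟩ := ENat.ne_top_iff_exists.mp hk0
  set e : K⟦X⟧ →+* K⟦X⟧ := (expand (R := K) (P.natDegree - k) hq : K⟦X⟧ →+* K⟦X⟧)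
  have hdeg : (P.map e).natDegree = P.natDegree :=
    Polynomial.natDegree_map_eq_of_injective (expand_injective _ hq) P
  have hdvd (i : ℕ) : (X ^ p) ^ ((P.map e).natDegree - i) ∣ (P.map e).coeff i := by
    rcases le_or_gt P.natDegree i with hi | hi
    · simp [hdeg, Nat.sub_eq_zero_of_le hi]
    · rw [hdeg, Polynomial.coeff_map, RingHom.coe_coe, ← pow_mul, X_pow_dvd_iff_le_order,
        order_expand, nsmul_eq_mul, mul_comm _ (order _), Nat.cast_mul, hp]
      exact hmin i hi
  obtain ⟨Q, hQ⟩ := exists_scaleRoots_eq hdvd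
  have hQdeg : Q.natDegree = P.natDegree := by
    rw [← hdeg, ← hQ, Polynomial.natDegree_scaleRoots]
  refine ⟨_, hq, p, Q, hQ, fun hdist ↦ ?_⟩
  have hmem : 1 ≤ (Q.coeff k).order :=
    one_le_order_iff_constCoeff_eq_zero.mpr
      (mem_maximalIdeal_powerSeries_iff.mp (hdist.mem (hQdeg.symm ▸ hk)))
  have hcoeff := congrArg (fun R ↦ (R.coeff k).order) hQ
  simp only [Polynomial.coeff_scaleRoots, hQdeg, Polynomial.coeff_map, e, RingHom.coe_coe,
    order_mul, order_pow, order_X, order_expand, nsmul_one, ← hp] at hcoeff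
  have hfin : (P.natDegree - k) • (p : ℕ∞) ≠ ⊤ := by
    exact_mod_cast ENat.natCast_ne_top ((P.natDegree - k) * p)
  have hzero : (Q.coeff k).order = 0 :=
    (ENat.addLECancellable_of_ne_top hfin).inj_left.mp (by rw [hcoeff, zero_add])
  exact absurd hmem (by simp [hzero])

/-- `P` has a Puiseux series root `ψ(t ^ (1 / N))`: `ψ` is a root of `P` after the base change
`t ↦ t ^ N` of its coefficients. -/
def HasPuiseuxRoot {R : Type*} [CommRing R] (P : R⟦X⟧[X]) : Prop :=
  ∃ (N : ℕ) (hN : N ≠ 0) (ψ : R⟦X⟧), P.eval₂ (expand (R := R) N hN : R⟦X⟧ →+* R⟦X⟧) ψ = 0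

namespace HasPuiseuxRoot

variable {R : Type*} [CommRing R] {P Q : R⟦X⟧[X]}

theorem of_dvd (h : HasPuiseuxRoot P) (hPQ : P ∣ Q) : HasPuiseuxRoot Q :=
  let ⟨N, hN, ψ, hψ⟩ := h
  ⟨N, hN, ψ, Polynomial.eval₂_eq_zero_of_dvd_of_eval₂_eq_zero _ _ hPQ hψ⟩

theorem of_taylor {a : R⟦X⟧} (h : HasPuiseuxRoot (Polynomial.taylor a P)) : HasPuiseuxRoot P := by
  obtain ⟨N, hN, ψ, hψ⟩ := h
  rw [Polynomial.taylor_apply, Polynomial.eval₂_comp] at hψ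
  exact ⟨N, hN, _, hψ⟩

theorem of_scaleRoots_eq_map_expand {q : ℕ} {hq : q ≠ 0} {s : R⟦X⟧} (h : HasPuiseuxRoot Q)
    (hQP : Q.scaleRoots s = P.map (expand (R := R) q hq : R⟦X⟧ →+* R⟦X⟧)) : HasPuiseuxRoot P := by
  obtain ⟨N, hN, ψ, hψ⟩ := h
  have hroot := Polynomial.scaleRoots_eval₂_eq_zero (s := s) _ hψ
  rw [hQP, Polynomial.eval₂_map] at hroot
  refine ⟨N * q, mul_ne_zero hN hq, expand N hN s * ψ, ?_⟩
  rw [expand_mul_eq_comp]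
  exact hroot

variable [IsAlgClosed K] [CharZero K]

theorem of_nextCoeff_eq_zero {P : K⟦X⟧[X]} (hP : P.Monic) (hn : P.natDegree ≠ 0)
    (hnext : P.nextCoeff = 0)
    (ih : ∀ W : K⟦X⟧[X], W.Monic → W.natDegree ≠ 0 → W.natDegree < P.natDegree →
      HasPuiseuxRoot W) : HasPuiseuxRoot P := by
  by_cases hne : ∃ i < P.natDegree, P.coeff i ≠ 0
  · obtain ⟨q, hq, p, Q, hQP, hQ⟩ := exists_scaleRoots_eq_map_expand hne
    refine of_scaleRoots_eq_map_expand ?_ hQP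
    have hQmonic : Q.Monic := by
      rw [← Polynomial.monic_scaleRoots_iff (X ^ p), hQP]
      exact hP.map _
    have hQdeg : Q.natDegree = P.natDegree := by
      rw [← Polynomial.natDegree_scaleRoots Q (X ^ p), hQP, hP.natDegree_map]
    have hQnext : Q.nextCoeff = 0 := by
      have h := nextCoeff_scaleRoots Q (X ^ p)
      rw [hQP, Polynomial.nextCoeff_map (by exact expand_injective q hq), hnext, map_zero] at h
      exact (mul_eq_zero.mp h.symm).resolve_right (pow_ne_zero _ X_ne_zero)
    have hQirr : ¬Irreducible Q := fun hirr ↦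
      hQ (isDistinguishedAt_of_irreducible_of_nextCoeff_mem hQmonic hirr (hQnext ▸ zero_mem _))
    rw [hQmonic.irreducible_iff_lt_natDegree_lt
      fun h1 ↦ hn (by rw [← hQdeg, h1, Polynomial.natDegree_one])] at hQirr
    push Not at hQirr
    obtain ⟨W, hW, hWdeg, hWQ⟩ := hQirr
    rw [Finset.mem_Ioc, hQdeg] at hWdeg
    exact (ih W hW hWdeg.1.ne' (by omega)).of_dvd hWQ
  · push Not at hne
    exact ⟨1, one_ne_zero, 0, by
      rw [Polynomial.eval₂_at_zero, hne 0 (Nat.pos_of_ne_zero hn), map_zero]⟩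

theorem of_monic {P : K⟦X⟧[X]} (hP : P.Monic) (hn : P.natDegree ≠ 0) : HasPuiseuxRoot P := by
  induction hd : P.natDegree using Nat.strong_induction_on generalizing P with
  | _ n ih =>
  subst hd
  have hnK : (P.natDegree : K) ≠ 0 := Nat.cast_ne_zero.mpr hn
  refine of_taylor (a := -C (P.natDegree : K)⁻¹ * P.nextCoeff)
    (of_nextCoeff_eq_zero (monic_taylor hP _) (by rwa [Polynomial.natDegree_taylor]) ?_
      fun W hW hW0 hlt ↦ ih _ (by rwa [Polynomial.natDegree_taylor] at hlt) hW hW0 rfl)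
  have hinv : (P.natDegree : K⟦X⟧) * C (P.natDegree : K)⁻¹ = 1 := by
    rw [← map_natCast C, ← map_mul, mul_inv_cancel₀ hnK, map_one]
  rw [nextCoeff_taylor, hP.leadingCoeff]
  linear_combination -P.nextCoeff * hinv

end HasPuiseuxRoot

end PowerSeries

section MvPowerSeries

open MvPowerSeries

section CommRing

variable {R : Type*} [CommRing R] {σ τ υ : Type*}

theorem subst_rename (e : σ → τ) [Filter.TendstoCofinite e] {φ : τ → MvPowerSeries υ R}
    (hφ : HasSubst φ) (g : MvPowerSeries σ R) : subst φ (rename e g) = subst (φ ∘ e) g := by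
  rw [rename_eq_subst, subst_comp_subst_apply (HasSubst.X_comp e) hφ]
  simp only [Function.comp_apply, subst_X hφ]
  rfl

theorem optionEquivLeft_rename_some (g : MvPowerSeries σ R) :
    optionEquivLeft σ R (rename Function.Embedding.some g) = PowerSeries.C g := by
  ext n m
  rw [PowerSeries.coeff_C, coeff_coeff_optionEquivLeft]
  split_ifs with hn
  · have hm : m.optionElim n = Finsupp.embDomain Function.Embedding.some m := by
      subst hn
      ext (_ | i)
      · rw [Finsupp.optionElim_apply_none, Finsupp.embDomain_of_notMem_range _ _ _ (by simp)]
      · rw [Finsupp.optionElim_apply_some]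
        exact (Finsupp.embDomain_apply_self Function.Embedding.some m i).symm
    rw [hm]
    exact coeff_embDomain_rename Function.Embedding.some g m
  · refine (coeff_rename_eq_zero _ _ ?_).trans (map_zero _).symm
    rintro ⟨y, hy⟩
    have hnone := DFunLike.congr_fun hy none
    rw [Finsupp.mapDomain_of_notMem_range _ _ (by simp)] at hnone
    exact hn (by simpa using hnone.symm)

/-- The substitution of `φ` into power series in the variables `Option σ`, written as power series
in the variable `none` whose coefficients are power series in the variables `σ`. -/
noncomputable def substOption {φ : Option σ → MvPowerSeries υ R} (hφ : HasSubst φ) :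
    (MvPowerSeries σ R)⟦X⟧ →ₐ[R] MvPowerSeries υ R :=
  (substAlgHom hφ).comp (optionEquivLeft σ R).symm.toAlgHom

theorem substOption_optionEquivLeft {φ : Option σ → MvPowerSeries υ R} (hφ : HasSubst φ)
    (g : MvPowerSeries (Option σ) R) : substOption hφ (optionEquivLeft σ R g) = subst φ g := by
  simp [substOption]

theorem substOption_C {φ : Option σ → MvPowerSeries υ R} (hφ : HasSubst φ)
    (a : MvPowerSeries σ R) : substOption hφ (PowerSeries.C a) = subst (φ ∘ some) a := by
  rw [← optionEquivLeft_rename_some, substOption_optionEquivLeft, subst_rename _ hφ]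
  rfl

theorem substOption_X {φ : Option σ → MvPowerSeries υ R} (hφ : HasSubst φ) :
    substOption hφ PowerSeries.X = φ none := by
  rw [← optionEquivLeft_X_none, substOption_optionEquivLeft, subst_X hφ]

theorem substOption_comp_C {φ : Option Unit → R⟦X⟧} (hφ : HasSubst φ) {N : ℕ} (hN : N ≠ 0)
    (hφN : φ (some ()) = PowerSeries.X ^ N) :
    (substOption hφ : R⟦X⟧⟦X⟧ →+* R⟦X⟧).comp PowerSeries.C =
      (PowerSeries.expand (R := R) N hN : R⟦X⟧ →+* R⟦X⟧) := by
  ext1 a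
  have hsome : φ ∘ some = fun _ ↦ PowerSeries.X ^ N := funext fun _ ↦ hφN
  rw [RingHom.comp_apply, RingHom.coe_coe, RingHom.coe_coe, PowerSeries.expand_apply,
    PowerSeries.subst, ← hsome]
  exact substOption_C hφ a

/-- `φ` is a parametrization of the germ `f = 0`: it is not constant, passes through the origin
for `τ = 0`, and the kernel of the substitution `g ↦ g(φ(τ))` is generated by `f`. It is meant for
finite `σ`: otherwise `subst` can take a junk value. -/
structure IsParametrization (φ : σ → R⟦X⟧) (f : MvPowerSeries σ R) : Prop where
  constantCoeff_eq_zero (i : σ) : PowerSeries.constantCoeff (φ i) = 0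
  ne_zero : φ ≠ 0
  subst_eq_zero_iff (g : MvPowerSeries σ R) : subst φ g = 0 ↔ f ∣ g

theorem IsParametrization.of_renameEquiv [Finite τ] {e : σ ≃ τ} {φ : τ → R⟦X⟧}
    {f : MvPowerSeries σ R} (h : IsParametrization φ (renameEquiv R e f)) :
    IsParametrization (φ ∘ e) f where
  constantCoeff_eq_zero i := h.constantCoeff_eq_zero (e i)
  ne_zero h0 := h.ne_zero (funext fun i ↦ by simpa using congr_fun h0 (e.symm i))
  subst_eq_zero_iff g := by
    rw [← subst_rename e (hasSubst_of_constantCoeff_zero h.constantCoeff_eq_zero),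
      ← map_dvd_iff (renameEquiv R e), ← h.subst_eq_zero_iff]
    rfl

theorem coeff_pow_mul_pow_eq_zero {φ₁ φ₂ : R⟦X⟧} (h₁ : PowerSeries.constantCoeff φ₁ = 0)
    (h₂ : PowerSeries.constantCoeff φ₂ = 0) {d i j : ℕ} (hd : d < i + j) :
    PowerSeries.coeff d (φ₁ ^ i * φ₂ ^ j) = 0 := by
  refine PowerSeries.X_pow_dvd_iff.mp ?_ d hd
  rw [pow_add]
  exact mul_dvd_mul (pow_dvd_pow_of_dvd (PowerSeries.X_dvd_iff.mpr h₁) i)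
    (pow_dvd_pow_of_dvd (PowerSeries.X_dvd_iff.mpr h₂) j)

theorem coeff_subst_pair {φ₁ φ₂ : R⟦X⟧} (h₁ : PowerSeries.constantCoeff φ₁ = 0)
    (h₂ : PowerSeries.constantCoeff φ₂ = 0) (g : MvPowerSeries (Fin 2) R) (d : ℕ) :
    PowerSeries.coeff d (subst ![φ₁, φ₂] g) =
      ∑ p ∈ Finset.range (d + 1) ×ˢ Finset.range (d + 1),
        coeff (Finsupp.single 0 p.1 + Finsupp.single 1 p.2) g *
          PowerSeries.coeff d (φ₁ ^ p.1 * φ₂ ^ p.2) := by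
  have hφ : HasSubst ![φ₁, φ₂] :=
    hasSubst_of_constantCoeff_zero (Fin.forall_fin_two.mpr ⟨h₁, h₂⟩)
  let e : ℕ × ℕ ≃ (Fin 2 →₀ ℕ) :=
    (finTwoArrowEquiv ℕ).symm.trans Finsupp.equivFunOnFinite.symm
  have he (p : ℕ × ℕ) : e p = Finsupp.single 0 p.1 + Finsupp.single 1 p.2 := by
    ext i
    fin_cases i <;> simp [e]
  have hterm (p : ℕ × ℕ) : coeff (e p) g • coeff (Finsupp.single () d)
      ((e p).prod fun i k ↦ (![φ₁, φ₂] : Fin 2 → R⟦X⟧) i ^ k) =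
        coeff (Finsupp.single 0 p.1 + Finsupp.single 1 p.2) g *
          PowerSeries.coeff d (φ₁ ^ p.1 * φ₂ ^ p.2) := by
    rw [Finsupp.prod_fintype _ _ (by simp), Fin.prod_univ_two, he, smul_eq_mul]
    simp [PowerSeries.coeff]
  rw [PowerSeries.coeff, coeff_subst hφ, ← finsum_comp_equiv e, finsum_congr hterm]
  refine finsum_eq_sum_of_support_subset _ fun p hp ↦ ?_
  by_contra hmem
  refine hp (mul_eq_zero_of_right _ (coeff_pow_mul_pow_eq_zero h₁ h₂ ?_))
  simp only [Finset.coe_product, Finset.coe_range, Set.mem_prod, Set.mem_Iio] at hmem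
  omega

end CommRing

variable {K : Type*} [Field K]

theorem X_some_dvd_of_map_residue_eq_zero {f : MvPowerSeries (Option Unit) K}
    (hres : (optionEquivLeft Unit K f).map (residue K⟦X⟧) = 0) : X (some ()) ∣ f := by
  rw [MvPowerSeries.X_dvd_iff]
  intro m hm
  have hmem := congrArg (PowerSeries.coeff (m none)) hres
  rw [PowerSeries.coeff_map, map_zero, residue_eq_zero_iff, mem_maximalIdeal_powerSeries_iff]
    at hmem
  have hm0 : m = (0 : Unit →₀ ℕ).optionElim (m none) := by
    ext (_ | _) <;> simp [hm]
  rw [hm0, ← coeff_coeff_optionEquivLeft, MvPowerSeries.coeff_zero_eq_constantCoeff_apply]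
  exact hmem

theorem isParametrization_of_subst_eq_zero {f : MvPowerSeries (Option Unit) K}
    (hf : Irreducible f) (hres : (optionEquivLeft Unit K f).map (residue K⟦X⟧) ≠ 0)
    {φ : Option Unit → K⟦X⟧} (hφ0 : ∀ i, PowerSeries.constantCoeff (φ i) = 0) {N : ℕ} (hN : N ≠ 0)
    (hφN : φ (some ()) = PowerSeries.X ^ N) (hφf : subst φ f = 0) : IsParametrization φ f where
  constantCoeff_eq_zero := hφ0
  ne_zero h0 := pow_ne_zero N PowerSeries.X_ne_zero (hφN.symm.trans (congr_fun h0 _))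
  subst_eq_zero_iff g := by
    have hφ : HasSubst φ := hasSubst_of_constantCoeff_zero hφ0
    have hC : Function.Injective
        ((substOption hφ : K⟦X⟧⟦X⟧ →+* K⟦X⟧).comp PowerSeries.C) := by
      rw [substOption_comp_C hφ hN hφN]
      exact expand_injective N hN
    have hker := ker_eq_span_of_irreducible
      ((MulEquiv.irreducible_iff (optionEquivLeft Unit K)).mpr hf) hres hC
      (by exact (substOption_optionEquivLeft hφ f).trans hφf)
    rw [← map_dvd_iff (optionEquivLeft Unit K), ← Ideal.mem_span_singleton, ← hker,
      RingHom.mem_ker, ← substOption_optionEquivLeft hφ]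
    rfl

variable [IsAlgClosed K] [CharZero K]

theorem exists_isParametrization_of_map_residue_ne_zero {f : MvPowerSeries (Option Unit) K}
    (hf : Irreducible f) (hres : (optionEquivLeft Unit K f).map (residue K⟦X⟧) ≠ 0) :
    ∃ φ : Option Unit → K⟦X⟧, IsParametrization φ f := by
  have hirr : Irreducible (optionEquivLeft Unit K f) :=
    (MulEquiv.irreducible_iff (optionEquivLeft Unit K)).mpr hf
  obtain ⟨W, hW, hW0, hFW⟩ := exists_isDistinguishedAt_associated hirr.not_isUnit hres
  obtain ⟨N, hN, ψ, hψ⟩ := HasPuiseuxRoot.of_monic hW.monic hW0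
  have hψ0 : PowerSeries.constantCoeff ψ = 0 := by
    rw [← mem_maximalIdeal_powerSeries_iff]
    refine mem_of_isDistinguishedAt_of_eval₂_eq_zero (fun a ha ↦ ?_) hW hψ
    rw [mem_maximalIdeal_powerSeries_iff] at ha
    rwa [Ideal.mem_comap, mem_maximalIdeal_powerSeries_iff, RingHom.coe_coe,
      PowerSeries.constantCoeff_expand]
  let φ : Option Unit → K⟦X⟧ := fun i ↦ i.elim ψ fun _ ↦ PowerSeries.X ^ N
  have hφ0 (i) : PowerSeries.constantCoeff (φ i) = 0 := by
    rcases i with _ | _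
    exacts [hψ0, by simp [φ, hN]]
  refine ⟨φ, isParametrization_of_subst_eq_zero hf hres hφ0 hN rfl ?_⟩
  have hφ := hasSubst_of_constantCoeff_zero hφ0
  have hSW : substOption hφ (W : K⟦X⟧⟦X⟧) = 0 := by
    have heval := map_polynomial_coe_eq_eval₂ (substOption hφ : K⟦X⟧⟦X⟧ →+* K⟦X⟧) W
    rw [substOption_comp_C hφ hN rfl, RingHom.coe_coe, substOption_X] at heval
    exact heval.trans hψ
  rw [← substOption_optionEquivLeft hφ]
  exact zero_dvd_iff.mp (hSW ▸ map_dvd (substOption hφ) hFW.symm.dvd)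

theorem exists_isParametrization_or_X_dvd {f : MvPowerSeries (Fin 2) K} (hf : Irreducible f)
    (i : Fin 2) : (∃ φ : Fin 2 → K⟦X⟧, IsParametrization φ f) ∨ X i ∣ f := by
  obtain ⟨e, he⟩ : ∃ e : Fin 2 ≃ Option Unit, e i = some () :=
    let e₀ := Fintype.equivOfCardEq (by simp)
    ⟨e₀.trans (Equiv.swap (e₀ i) (some ())), by simp⟩
  by_cases hres : (optionEquivLeft Unit K (renameEquiv K e f)).map (residue K⟦X⟧) = 0
  · refine .inr ((map_dvd_iff (renameEquiv K e)).mp ?_)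
    have hX : renameEquiv K e (X i) = X (some ()) := he ▸ rename_X e i
    rw [hX]
    exact X_some_dvd_of_map_residue_eq_zero hres
  · obtain ⟨φ, hφ⟩ := exists_isParametrization_of_map_residue_ne_zero
      ((MulEquiv.irreducible_iff (renameEquiv K e)).mpr hf) hres
    exact .inl ⟨φ ∘ e, hφ.of_renameEquiv⟩

theorem exists_isParametrization {f : MvPowerSeries (Fin 2) K} (hf : Irreducible f) :
    ∃ φ : Fin 2 → K⟦X⟧, IsParametrization φ f := by
  by_contra hno
  have hX (i : Fin 2) : X i ∣ f := (exists_isParametrization_or_X_dvd hf i).resolve_left hno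
  have hassoc (i : Fin 2) : Associated f (X i) :=
    (hf.dvd_iff.mp (hX i)).resolve_left fun hu ↦ by simpa using hu.map (constantCoeff (R := K))
  have hdvd : (X 0 : MvPowerSeries (Fin 2) K) ∣ X 1 := ((hassoc 0).symm.trans (hassoc 1)).dvd
  simpa using MvPowerSeries.X_dvd_iff.mp hdvd (Finsupp.single 1 1) (by simp)

theorem substPS_eq_subst {φ₁ φ₂ : ℂ⟦X⟧} (h₁ : PowerSeries.constantCoeff φ₁ = 0)
    (h₂ : PowerSeries.constantCoeff φ₂ = 0) (g : MvPowerSeries (Fin 2) ℂ) :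
    substPS φ₁ φ₂ g = subst ![φ₁, φ₂] g := by
  ext d
  rw [substPS, PowerSeries.coeff_mk, coeff_subst_pair h₁ h₂]

end MvPowerSeries

theorem poincare_stmt4_general {K : Type*} [Field K] [IsAlgClosed K] [CharZero K]
    (f : MvPowerSeries (Fin 2) K) (hf : Irreducible f) :
    ∃ φ₁ φ₂ : PowerSeries K,
      PowerSeries.constantCoeff φ₁ = 0 ∧
      PowerSeries.constantCoeff φ₂ = 0 ∧
      ¬(φ₁ = 0 ∧ φ₂ = 0) ∧
      MvPowerSeries.subst ![φ₁, φ₂] f = (0 : PowerSeries K) ∧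
      {g : MvPowerSeries (Fin 2) K | MvPowerSeries.subst ![φ₁, φ₂] g = (0 : PowerSeries K)} =
        ↑(Ideal.span {f}) := by
  obtain ⟨φ, hφ⟩ := exists_isParametrization hf
  have hpair : ![φ 0, φ 1] = φ := List.ofFn_inj.mp rfl
  refine ⟨φ 0, φ 1, hφ.constantCoeff_eq_zero 0, hφ.constantCoeff_eq_zero 1, fun h0 ↦ ?_, ?_, ?_⟩
  · exact hφ.ne_zero (funext (Fin.forall_fin_two.mpr h0))
  · exact hpair ▸ (hφ.subst_eq_zero_iff f).mpr dvd_rfl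
  · ext g
    rw [Set.mem_ofPred_eq, hpair, hφ.subst_eq_zero_iff, SetLike.mem_coe, Ideal.mem_span_singleton]

/-- Let `f ∈ ℂ[[x,y]]` be an irreducible formal power series with zero
constant term.  Then there exist `φ₁, φ₂ ∈ ℂ[[τ]]` with zero constant term, not both zero,
such that `f(φ₁(τ), φ₂(τ)) = 0` and, moreover, the kernel of the substitution homomorphism
`g ↦ g(φ₁, φ₂)` is exactly the principal ideal `(f)` generated by `f` (existence of a
parametrization/uniformization of the irreducible curve germ `{f = 0}`). -/
theorem poincare_stmt4 (f : MvPowerSeries (Fin 2) ℂ)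
    (hf : Irreducible f)
    (hf0 : MvPowerSeries.constantCoeff f = 0) :
    ∃ φ₁ φ₂ : PowerSeries ℂ,
      PowerSeries.constantCoeff φ₁ = 0 ∧
      PowerSeries.constantCoeff φ₂ = 0 ∧
      ¬(φ₁ = 0 ∧ φ₂ = 0) ∧
      substPS φ₁ φ₂ f = 0 ∧
      {g : MvPowerSeries (Fin 2) ℂ | substPS φ₁ φ₂ g = 0} =
        ↑(Ideal.span {f}) := by
  obtain ⟨φ₁, φ₂, h₁, h₂, h⟩ := poincare_stmt4_general f hf
  exact ⟨φ₁, φ₂, h₁, h₂, by simpa only [substPS_eq_subst h₁ h₂] using h⟩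
end
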